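/- For every s with 0 < s < 1, the function h(s) = √(1 − s) · ∑_{k=0}^∞ s^k/√(4k + 1) is differentiable at s and 2√(1 − s)·h'(s) = ∑_{k=0}^∞ a_k s^k, where a_k = (2k + 2)/√(4k + 5) − (2k + 1)/√(4k + 1). -/

import Mathlib

/-- The function `h s = √(1 - s) · ∑ₖ sᵏ / √(4k + 1)`. -/
noncomputable def hFun (s : ℝ) : ℝ :=
  Real.sqrt (1 - s) * ∑' k : ℕ, s ^ k / Real.sqrt (4 * (k : ℝ) + 1)

lemma aux_summable (r : ℝ) (h0 : 0 ≤ r) (h1 : r < 1) :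
    Summable (fun k : ℕ => (k : ℝ) * r ^ (k - 1)) := by
  rw [← summable_nat_add_iff 1]
  have hr : ‖r‖ < 1 := by rwa [Real.norm_of_nonneg h0]
  have a := summable_pow_mul_geometric_of_norm_lt_one 1 hr
  have b := summable_geometric_of_lt_one h0 h1
  refine (a.add b).congr fun k => ?_
  simp only [Nat.add_sub_cancel]
  push_cast
  ring

lemma aux_sqrt (k : ℕ) : 1 ≤ Real.sqrt (4 * (k : ℝ) + 1) := by
  rw [Real.one_le_sqrt]
  have : (0 : ℝ) ≤ k := k.cast_nonneg
  linarith

lemma aux_deriv_summable (s : ℝ) (hs0 : 0 < s) (hs1 : s < 1) :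
    Summable (fun k : ℕ => (k : ℝ) * s ^ (k - 1) / Real.sqrt (4 * (k : ℝ) + 1)) := by
  refine Summable.of_nonneg_of_le (fun k => by positivity) (fun k => ?_)
    (aux_summable s hs0.le hs1)
  exact div_le_self (by positivity) (aux_sqrt k)

lemma aux_fun_summable (s : ℝ) (hs0 : 0 < s) (hs1 : s < 1) :
    Summable (fun k : ℕ => s ^ k / Real.sqrt (4 * (k : ℝ) + 1)) := by
  refine Summable.of_nonneg_of_le (fun k => by positivity) (fun k => ?_)
    (summable_geometric_of_lt_one hs0.le hs1)
  exact div_le_self (by positivity) (aux_sqrt k)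

lemma aux_hasDerivAt (s : ℝ) (hs0 : 0 < s) (hs1 : s < 1) :
    HasDerivAt (fun x : ℝ => ∑' k : ℕ, x ^ k / Real.sqrt (4 * (k : ℝ) + 1))
      (∑' k : ℕ, (k : ℝ) * s ^ (k - 1) / Real.sqrt (4 * (k : ℝ) + 1)) s := by
  obtain ⟨r, hr, hr1⟩ := exists_between hs1
  have hr0 : 0 < r := hs0.trans hr
  refine hasDerivAt_tsum_of_isPreconnected
    (g := fun (k : ℕ) (x : ℝ) => x ^ k / Real.sqrt (4 * (k : ℝ) + 1))
    (g' := fun (k : ℕ) (x : ℝ) => (k : ℝ) * x ^ (k - 1) / Real.sqrt (4 * (k : ℝ) + 1))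
    (t := Set.Ioo 0 r) (y₀ := s)
    (aux_summable r hr0.le hr1) isOpen_Ioo isPreconnected_Ioo ?_ ?_ ⟨hs0, hr⟩
    (aux_fun_summable s hs0 hs1) ⟨hs0, hr⟩
  · intro k y _
    exact (hasDerivAt_pow k y).div_const _
  · intro k y hy
    have hy0 := hy.1
    rw [Real.norm_of_nonneg (by positivity)]
    refine (div_le_self (by positivity) (aux_sqrt k)).trans ?_
    gcongr
    exact hy.2.le

theorem hFun_hasDerivAt (s : ℝ) (hs0 : 0 < s) (hs1 : s < 1) :
    DifferentiableAt ℝ hFun s ∧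
      2 * Real.sqrt (1 - s) * deriv hFun s =
        ∑' k : ℕ, ((2 * (k : ℝ) + 2) / Real.sqrt (4 * (k : ℝ) + 5) -
          (2 * (k : ℝ) + 1) / Real.sqrt (4 * (k : ℝ) + 1)) * s ^ k := by
  have hpos : 0 < 1 - s := by linarith
  have hq : 0 < Real.sqrt (1 - s) := Real.sqrt_pos.mpr hpos
  have hsq : Real.sqrt (1 - s) * Real.sqrt (1 - s) = 1 - s := Real.mul_self_sqrt hpos.le
  have hD := (((hasDerivAt_id s).const_sub 1).sqrt hpos.ne').mul (aux_hasDerivAt s hs0 hs1)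
  have hD' : HasDerivAt hFun _ s := hD
  refine ⟨hD'.differentiableAt, ?_⟩
  rw [hD'.deriv]
  have hF := (aux_fun_summable s hs0 hs1).hasSum
  have hG := (aux_deriv_summable s hs0 hs1).hasSum
  set F := ∑' k : ℕ, s ^ k / Real.sqrt (4 * (k : ℝ) + 1)
  set G := ∑' k : ℕ, (k : ℝ) * s ^ (k - 1) / Real.sqrt (4 * (k : ℝ) + 1)
  have hG1 := (hasSum_nat_add_iff' 1).mpr hG
  have hG2 := hG.mul_left s
  have hall := ((hG1.mul_left 2).sub (hG2.mul_left 2)).sub hF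
  have key := hall.tsum_eq
  have e : (∑' k : ℕ, ((2 * (k : ℝ) + 2) / Real.sqrt (4 * (k : ℝ) + 5) -
          (2 * (k : ℝ) + 1) / Real.sqrt (4 * (k : ℝ) + 1)) * s ^ k) = 2 * G - 2 * (s * G) - F := by
    simp only [Finset.sum_range_one, Nat.cast_zero, zero_mul, zero_div, sub_zero] at key
    rw [← key]
    refine tsum_congr fun k => ?_
    have h5 : (4 * ((k + 1 : ℕ) : ℝ) + 1) = 4 * (k : ℝ) + 5 := by push_cast; ring
    rw [h5]
    have hk : s * ((k : ℝ) * s ^ (k - 1) / Real.sqrt (4 * (k : ℝ) + 1)) =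
        (k : ℝ) * s ^ k / Real.sqrt (4 * (k : ℝ) + 1) := by
      rcases k with _ | k
      · simp
      · simp only [Nat.add_sub_cancel]
        ring
    rw [hk]
    simp only [Nat.add_sub_cancel]
    push_cast
    ring
  rw [e]
  simp only [id]
  have : 2 * Real.sqrt (1 - s) * (-1 / (2 * Real.sqrt (1 - s)) * F + Real.sqrt (1 - s) * G)
      = -F + 2 * (Real.sqrt (1 - s) * Real.sqrt (1 - s)) * G := by
    field_simp
  refine this.trans ?_
  rw [hsq]
  ring
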